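/- arXiv:0712.2545 — 2 statements merged into one kernel-verified Lean document; each statement's English description precedes it below -/
import Mathlib

section
/- The real number arctan(4/3)/π is irrational. -/
/-!
If `q` is rational, so is `cos (2 * arctan q) = (1 - q ^ 2) / (1 + q ^ 2)`. If `arctan q / π` is
rational too, Niven's theorem leaves only the values `-1, -1/2, 0, 1/2, 1` for this cosine. Of
these, `-1` is impossible and `±1/2` would make `3` a rational square, while `0` and `1` force
`q = ±1` and `q = 0`.
-/

open Real

theorem cos_two_mul_arctan (x : ℝ) : cos (2 * arctan x) = (1 - x ^ 2) / (1 + x ^ 2) := by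
  rw [cos_two_mul, cos_sq_arctan]
  field_simp
  ring

theorem niven_ratCast {θ : ℝ} {c : ℚ} (hθ : ∃ r : ℚ, θ = r * π) (hc : cos θ = c) :
    c ∈ ({-1, -1 / 2, 0, 1 / 2, 1} : Set ℚ) := by
  rw [← (Rat.cast_injective (α := ℝ)).mem_set_image, ← hc]
  simpa [Set.image_insert_eq] using niven hθ ⟨c, hc⟩

theorem mem_of_one_sub_sq_div_one_add_sq_mem {q : ℚ}
    (hq : (1 - q ^ 2) / (1 + q ^ 2) ∈ ({-1, -1 / 2, 0, 1 / 2, 1} : Set ℚ)) :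
    q ∈ ({-1, 0, 1} : Set ℚ) := by
  have three_not_isSquare : ¬IsSquare (3 : ℚ) := by norm_num
  have one_add_sq_ne_zero : 1 + q ^ 2 ≠ 0 := by positivity
  simp only [Set.mem_insert_iff, Set.mem_singleton_iff, div_eq_iff one_add_sq_ne_zero] at hq ⊢
  rcases hq with h | h | h | h | h
  · linarith
  · exact absurd ⟨q, by linarith⟩ three_not_isSquare
  · have : q = 1 ∨ q = -1 := sq_eq_one_iff.mp (by linarith)
    tauto
  · exact absurd ⟨3 * q, by linarith⟩ three_not_isSquare
  · have : q = 0 := pow_eq_zero_iff two_ne_zero |>.mp (by linarith)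
    tauto

theorem irrational_arctan_div_pi_iff {q : ℚ} :
    Irrational (arctan q / π) ↔ q ∉ ({-1, 0, 1} : Set ℚ) := by
  constructor
  · rintro h (rfl | rfl | rfl)
    · exact h ⟨-1 / 4, by push_cast; rw [arctan_neg, arctan_one]; field_simp⟩
    · exact h ⟨0, by simp⟩
    · exact h ⟨1 / 4, by push_cast; rw [arctan_one]; field_simp⟩
  · rintro hq ⟨r, hr⟩
    have angle_rational : ∃ s : ℚ, 2 * arctan q = s * π :=
      ⟨2 * r, by push_cast; rw [hr]; field_simp⟩
    have cos_eq : cos (2 * arctan q) = ((1 - q ^ 2) / (1 + q ^ 2) : ℚ) := by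
      push_cast
      exact cos_two_mul_arctan q
    exact hq (mem_of_one_sub_sq_div_one_add_sq_mem (niven_ratCast angle_rational cos_eq))

/-- `arctan(4/3)/π` is irrational. -/
theorem arctan_four_thirds_div_pi_irrational :
    Irrational (Real.arctan (4 / 3) / Real.pi) := by
  have h : Irrational (arctan (4 / 3 : ℚ) / π) := irrational_arctan_div_pi_iff.mpr (by norm_num)
  simpa using h
end

section
/- Let E be a finite-dimensional complex inner product space, let t be a positive integer, let U_1, …, U_t and V_1, …, V_t be unitary operators on E with ‖U_τ − V_τ‖ ≤ ε for every τ (operator norm), let P : E → E be an orthogonal projection, and let ψ ∈ E be a unit vector. Then |‖P(U_t⋯U_1 ψ)‖² − ‖P(V_t⋯V_1 ψ)‖²| ≤ 2·t·ε. -/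
open scoped InnerProductSpace

/-!
Replacing the gates one at a time telescopes the difference of the two products, since
`a A - b B = (a - b) B + a (A - B)`; as all factors are contractions, the gate errors just add up.
A squared norm is Lipschitz with constant `2` on the unit ball, so measuring at most doubles the
error.
-/

section ContractionProducts

variable {ι R : Type*} [SeminormedRing R]

-- `‖1‖ ≤ 1` instead of `NormOneClass R`: operators on the zero space satisfy only the former.
theorem norm_list_prod_le_one (hone : ‖(1 : R)‖ ≤ 1) {l : List R} (hl : ∀ a ∈ l, ‖a‖ ≤ 1) :
    ‖l.prod‖ ≤ 1 :=
  List.prod_induction (‖·‖ ≤ 1)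
    (fun _ _ ha hb ↦ (norm_mul_le _ _).trans (mul_le_one₀ ha (norm_nonneg _) hb)) hone hl

theorem norm_mul_sub_mul_le_add {a b A B : R} (ha : ‖a‖ ≤ 1) (hB : ‖B‖ ≤ 1) :
    ‖a * A - b * B‖ ≤ ‖a - b‖ + ‖A - B‖ := by
  calc
    ‖a * A - b * B‖ = ‖(a - b) * B + a * (A - B)‖ := by congr 1; noncomm_ring
    _ ≤ ‖a - b‖ * ‖B‖ + ‖a‖ * ‖A - B‖ :=
      norm_add_le_of_le (norm_mul_le _ _) (norm_mul_le _ _)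
    _ ≤ ‖a - b‖ + ‖A - B‖ :=
      add_le_add (mul_le_of_le_one_right (norm_nonneg _) hB)
        (mul_le_of_le_one_left (norm_nonneg _) ha)

theorem norm_list_prod_map_sub_le_sum (hone : ‖(1 : R)‖ ≤ 1) {a b : ι → R} {l : List ι}
    (ha : ∀ i ∈ l, ‖a i‖ ≤ 1) (hb : ∀ i ∈ l, ‖b i‖ ≤ 1) :
    ‖(l.map a).prod - (l.map b).prod‖ ≤ (l.map fun i ↦ ‖a i - b i‖).sum := by
  induction l with
  | nil => simp
  | cons i l ih =>
    simp only [List.forall_mem_cons] at ha hb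
    have hprod : ‖(l.map b).prod‖ ≤ 1 :=
      norm_list_prod_le_one hone (List.forall_mem_map.2 hb.2)
    simp only [List.map_cons, List.prod_cons, List.sum_cons]
    exact (norm_mul_sub_mul_le_add ha.1 hprod).trans (by gcongr; exact ih ha.2 hb.2)

theorem norm_prod_reverse_ofFn_sub_le_mul (hone : ‖(1 : R)‖ ≤ 1) {t : ℕ} {ε : ℝ}
    {a b : Fin t → R} (ha : ∀ i, ‖a i‖ ≤ 1) (hb : ∀ i, ‖b i‖ ≤ 1)
    (hab : ∀ i, ‖a i - b i‖ ≤ ε) :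
    ‖(List.ofFn a).reverse.prod - (List.ofFn b).reverse.prod‖ ≤ t * ε := by
  simp only [List.ofFn_eq_map, ← List.map_reverse]
  calc
    _ ≤ ((List.finRange t).reverse.map fun i ↦ ‖a i - b i‖).sum :=
      norm_list_prod_map_sub_le_sum hone (fun i _ ↦ ha i) (fun i _ ↦ hb i)
    _ ≤ t * ε := by
      simpa using List.sum_le_card_nsmul ((List.finRange t).reverse.map fun i ↦ ‖a i - b i‖) ε
        (by simpa using hab)

end ContractionProducts

theorem abs_norm_sq_sub_norm_sq_le {E : Type*} [SeminormedAddCommGroup E] (x y : E) :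
    |‖x‖ ^ 2 - ‖y‖ ^ 2| ≤ (‖x‖ + ‖y‖) * ‖x - y‖ := by
  rw [sq_sub_sq, abs_mul, abs_of_nonneg (by positivity)]
  gcongr
  exact abs_norm_sub_norm_le x y

section Operators

variable {𝕜 E F : Type*} [NontriviallyNormedField 𝕜] [SeminormedAddCommGroup E]
  [NormedSpace 𝕜 E] [SeminormedAddCommGroup F] [NormedSpace 𝕜 F]

theorem abs_norm_sq_apply_sub_norm_sq_apply_le {A B : E →L[𝕜] F} (hA : ‖A‖ ≤ 1) (hB : ‖B‖ ≤ 1)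
    (x : E) : |‖A x‖ ^ 2 - ‖B x‖ ^ 2| ≤ 2 * ‖A - B‖ * ‖x‖ ^ 2 := by
  calc
    |‖A x‖ ^ 2 - ‖B x‖ ^ 2| ≤ (‖A x‖ + ‖B x‖) * ‖(A - B) x‖ :=
      abs_norm_sq_sub_norm_sq_le (A x) (B x)
    _ ≤ (1 * ‖x‖ + 1 * ‖x‖) * (‖A - B‖ * ‖x‖) := by
      gcongr
      exacts [A.le_of_opNorm_le hA x, B.le_of_opNorm_le hB x, (A - B).le_opNorm x]
    _ = 2 * ‖A - B‖ * ‖x‖ ^ 2 := by ring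

theorem acceptance_prob_stable_product_general {t : ℕ} {ε : ℝ} {U V : Fin t → (E →L[𝕜] E)}
    (hU : ∀ τ, ‖U τ‖ ≤ 1) (hV : ∀ τ, ‖V τ‖ ≤ 1) (hUV : ∀ τ, ‖U τ - V τ‖ ≤ ε)
    {P : E →L[𝕜] F} (hP : ‖P‖ ≤ 1) (ψ : E) :
    |‖P ((List.ofFn U).reverse.prod ψ)‖ ^ 2 - ‖P ((List.ofFn V).reverse.prod ψ)‖ ^ 2| ≤
      2 * (t * ε) * ‖ψ‖ ^ 2 := by
  have hone : ‖(1 : E →L[𝕜] E)‖ ≤ 1 := ContinuousLinearMap.norm_id_le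
  have hcomp {W : Fin t → (E →L[𝕜] E)} (hW : ∀ τ, ‖W τ‖ ≤ 1) :
      ‖P ∘L (List.ofFn W).reverse.prod‖ ≤ 1 :=
    (P.opNorm_comp_le _).trans <| mul_le_one₀ hP (norm_nonneg _) <|
      norm_list_prod_le_one hone (by simpa [List.mem_ofFn] using hW)
  have hdist : ‖P ∘L (List.ofFn U).reverse.prod - P ∘L (List.ofFn V).reverse.prod‖ ≤ t * ε := by
    rw [← ContinuousLinearMap.comp_sub]
    calc
      _ ≤ ‖P‖ * ‖(List.ofFn U).reverse.prod - (List.ofFn V).reverse.prod‖ := P.opNorm_comp_le _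
      _ ≤ ‖(List.ofFn U).reverse.prod - (List.ofFn V).reverse.prod‖ :=
        mul_le_of_le_one_left (norm_nonneg _) hP
      _ ≤ t * ε := norm_prod_reverse_ofFn_sub_le_mul hone hU hV hUV
  exact (abs_norm_sq_apply_sub_norm_sq_apply_le (hcomp hU) (hcomp hV) ψ).trans (by gcongr)

end Operators

theorem norm_le_one_of_mem_unitary {A : Type*} [NormedRing A] [StarRing A] [CStarRing A]
    {u : A} (hu : u ∈ unitary A) : ‖u‖ ≤ 1 := by
  nontriviality A
  exact (CStarRing.norm_of_mem_unitary hu).le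

theorem opNorm_le_one_of_isSymmetricProjection {𝕜 E : Type*} [RCLike 𝕜]
    [NormedAddCommGroup E] [InnerProductSpace 𝕜 E] {P : E →L[𝕜] E}
    (hP : P.IsSymmetricProjection) : ‖P‖ ≤ 1 := by
  obtain ⟨K, _, hPK⟩ := LinearMap.isSymmetricProjection_iff_eq_coe_starProjection.1 hP
  rw [ContinuousLinearMap.coe_injective hPK]
  exact K.starProjection_norm_le

/-- Approximating each gate of a time-`t` quantum evolution to within `ε` changes any
measurement probability by at most `2·t·ε`: if `U_τ`, `V_τ` are unitary operators on a
finite-dimensional complex inner product space with `‖U_τ − V_τ‖ ≤ ε` for every `τ`, `P` is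
an orthogonal projection, and `ψ` is a unit vector, then
`|‖P(U_t⋯U_1 ψ)‖² − ‖P(V_t⋯V_1 ψ)‖²| ≤ 2·t·ε`. -/
theorem acceptance_prob_stable_product {E : Type*} [NormedAddCommGroup E]
    [InnerProductSpace ℂ E] [FiniteDimensional ℂ E]
    (t : ℕ) (ht : 0 < t) (ε : ℝ)
    (U V : Fin t → (E →L[ℂ] E))
    (hU : ∀ τ, U τ ∈ unitary (E →L[ℂ] E)) (hV : ∀ τ, V τ ∈ unitary (E →L[ℂ] E))
    (hUV : ∀ τ, ‖U τ - V τ‖ ≤ ε)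
    (P : E →L[ℂ] E)
    (hidem : ∀ v : E, P (P v) = P v)
    (hsa : ∀ v w : E, ⟪P v, w⟫_ℂ = ⟪v, P w⟫_ℂ)
    (ψ : E) (hψ : ‖ψ‖ = 1) :
    |‖P ((List.ofFn U).reverse.prod ψ)‖ ^ 2 - ‖P ((List.ofFn V).reverse.prod ψ)‖ ^ 2| ≤
      2 * t * ε := by
  have : CompleteSpace E := FiniteDimensional.complete ℂ E
  simpa [hψ, mul_assoc] using acceptance_prob_stable_product_general
    (fun τ ↦ norm_le_one_of_mem_unitary (hU τ)) (fun τ ↦ norm_le_one_of_mem_unitary (hV τ)) hUV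
    (opNorm_le_one_of_isSymmetricProjection ⟨LinearMap.ext hidem, hsa⟩) ψ
end
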